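/- I_b^{(∞)} is monotone under local operations: for completely positive trace-preserving maps Λ_A, Λ_B acting on A and B respectively, I_b^{(∞)}((Λ_A ⊗ Λ_B)[ρ_{AB}]) ≤ I_b^{(∞)}(ρ_{AB}). -/

import Mathlib

open scoped BigOperators Kronecker ComplexOrder
open Matrix Filter Topology

noncomputable section

/-- Shannon entropy (log base 2) of a finitely supported distribution. -/
def shannon {I : Type} [Fintype I] (p : I → ℝ) : ℝ := -∑ i, p i * Real.logb 2 (p i)

/-- `p` is a probability distribution. -/
def IsProbDist {I : Type} [Fintype I] (p : I → ℝ) : Prop :=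
  (∀ i, 0 ≤ p i) ∧ ∑ i, p i = 1

/-- First marginal of a joint distribution. -/
def margA {I J : Type} [Fintype J] (p : I × J → ℝ) : I → ℝ := fun i => ∑ j, p (i, j)

/-- Second marginal of a joint distribution. -/
def margB {I J : Type} [Fintype I] (p : I × J → ℝ) : J → ℝ := fun j => ∑ i, p (i, j)

/-- Classical mutual information of a joint distribution. -/
def classMI {I J : Type} [Fintype I] [Fintype J] (p : I × J → ℝ) : ℝ :=
  shannon (margA p) + shannon (margB p) - shannon p

/-- Kullback-Leibler divergence (log base 2). -/
def klDiv {I : Type} [Fintype I] (p q : I → ℝ) : ℝ := ∑ i, p i * Real.logb 2 (p i / q i)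

/-- A density operator: positive semidefinite with unit trace. -/
def IsDensity {n : Type} [Fintype n] (ρ : Matrix n n ℂ) : Prop :=
  ρ.PosSemidef ∧ ρ.trace = 1

/-- Von Neumann entropy (log base 2) via the eigenvalues of a Hermitian matrix. -/
def vnEntropy {n : Type} [Fintype n] [DecidableEq n] (ρ : Matrix n n ℂ) : ℝ :=
  if h : ρ.IsHermitian then -∑ i, h.eigenvalues i * Real.logb 2 (h.eigenvalues i) else 0

/-- Partial trace over the second tensor factor. -/
def ptraceB {A B : Type} [Fintype B] (ρ : Matrix (A × B) (A × B) ℂ) : Matrix A A ℂ :=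
  Matrix.of fun a a' => ∑ b, ρ (a, b) (a', b)

/-- Partial trace over the first tensor factor. -/
def ptraceA {A B : Type} [Fintype A] (ρ : Matrix (A × B) (A × B) ℂ) : Matrix B B ℂ :=
  Matrix.of fun b b' => ∑ a, ρ (a, b) (a, b')

/-- Quantum mutual information I(A:B) = S(ρ_A) + S(ρ_B) - S(ρ_{AB}). -/
def mutInfo {A B : Type} [Fintype A] [Fintype B] [DecidableEq A] [DecidableEq B]
    (ρ : Matrix (A × B) (A × B) ℂ) : ℝ :=
  vnEntropy (ptraceB ρ) + vnEntropy (ptraceA ρ) - vnEntropy ρ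

/-- Tensor product of two bipartite states, with the cut (A₁A₂ : B₁B₂). -/
def tens2 {A₁ B₁ A₂ B₂ : Type}
    (ρ : Matrix (A₁ × B₁) (A₁ × B₁) ℂ) (σ : Matrix (A₂ × B₂) (A₂ × B₂) ℂ) :
    Matrix ((A₁ × A₂) × (B₁ × B₂)) ((A₁ × A₂) × (B₁ × B₂)) ℂ :=
  Matrix.of fun x y => ρ (x.1.1, x.2.1) (y.1.1, y.2.1) * σ (x.1.2, x.2.2) (y.1.2, y.2.2)

/-- n-fold tensor power of a bipartite state, with the A^n : B^n cut. -/
def tpow {A B : Type} (σ : Matrix (A × B) (A × B) ℂ) (n : ℕ) :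
    Matrix ((Fin n → A) × (Fin n → B)) ((Fin n → A) × (Fin n → B)) ℂ :=
  Matrix.of fun x y => ∏ i, σ (x.1 i, x.2 i) (y.1 i, y.2 i)

/-- Reduced state of the k-th copy (partial trace over all other copies). -/
def copyMarginal {A B : Type} [Fintype A] [Fintype B] [DecidableEq A] [DecidableEq B] {n : ℕ}
    (ρ : Matrix ((Fin n → A) × (Fin n → B)) ((Fin n → A) × (Fin n → B)) ℂ) (k : Fin n) :
    Matrix (A × B) (A × B) ℂ :=
  Matrix.of fun x y => ∑ f : Fin n → A, ∑ g : Fin n → B,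
    if f k = x.1 ∧ g k = x.2 then
      ρ (f, g) (Function.update f k y.1, Function.update g k y.2) else 0

/-- `τ` is an n-copy broadcast state of `ρ`. -/
def IsBroadcast {A B : Type} [Fintype A] [Fintype B] [DecidableEq A] [DecidableEq B] (n : ℕ)
    (τ : Matrix ((Fin n → A) × (Fin n → B)) ((Fin n → A) × (Fin n → B)) ℂ)
    (ρ : Matrix (A × B) (A × B) ℂ) : Prop :=
  IsDensity τ ∧ ∀ k : Fin n, copyMarginal τ k = ρ

/-- n-copy broadcast mutual information (I_b)_n. -/
def Ib {A B : Type} [Fintype A] [Fintype B] [DecidableEq A] [DecidableEq B] (n : ℕ)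
    (ρ : Matrix (A × B) (A × B) ℂ) : ℝ :=
  sInf {x | ∃ τ, IsBroadcast n τ ρ ∧ x = mutInfo τ}

/-- Partial trace of a state on (A A' : B B') over the primed (ancilla) systems. -/
def ptracePrime {A B A' B' : Type} [Fintype A'] [Fintype B']
    (τ : Matrix ((A × A') × (B × B')) ((A × A') × (B × B')) ℂ) :
    Matrix (A × B) (A × B) ℂ :=
  Matrix.of fun x y => ∑ a', ∑ b', τ ((x.1, a'), (x.2, b')) ((y.1, a'), (y.2, b'))

/-- Partial trace of a state on (A A' : B B') over the unprimed systems. -/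
def ptraceMain {A B A' B' : Type} [Fintype A] [Fintype B]
    (τ : Matrix ((A × A') × (B × B')) ((A × A') × (B × B')) ℂ) :
    Matrix (A' × B') (A' × B') ℂ :=
  Matrix.of fun x y => ∑ a, ∑ b, τ ((a, x.1), (b, x.2)) ((a, y.1), (b, y.2))

/-- Conditional entanglement of mutual information (CEMI). -/
def EI {A B : Type} [Fintype A] [Fintype B] [DecidableEq A] [DecidableEq B]
    (ρ : Matrix (A × B) (A × B) ℂ) : ℝ :=
  (1 / 2) * sInf {x | ∃ (dA dB : ℕ)
    (τ : Matrix ((A × Fin dA) × (B × Fin dB)) ((A × Fin dA) × (B × Fin dB)) ℂ),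
    IsDensity τ ∧ ptracePrime τ = ρ ∧ x = mutInfo τ - mutInfo (ptraceMain τ)}

/-- Classical squashed entanglement, via the ensemble formula. -/
def EsqC {A B : Type} [Fintype A] [Fintype B] [DecidableEq A] [DecidableEq B]
    (ρ : Matrix (A × B) (A × B) ℂ) : ℝ :=
  (1 / 2) * sInf {x | ∃ (m : ℕ) (p : Fin m → ℝ) (σ : Fin m → Matrix (A × B) (A × B) ℂ),
    (∀ k, 0 ≤ p k) ∧ (∑ k, p k = 1) ∧ (∀ k, IsDensity (σ k)) ∧
    (∑ k, (p k : ℂ) • σ k = ρ) ∧ x = ∑ k, p k * mutInfo (σ k)}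

/-- Separability of a bipartite state. -/
def Separable {A B : Type} [Fintype A] [Fintype B]
    (ρ : Matrix (A × B) (A × B) ℂ) : Prop :=
  ∃ (m : ℕ) (p : Fin m → ℝ) (σA : Fin m → Matrix A A ℂ) (σB : Fin m → Matrix B B ℂ),
    (∀ k, 0 ≤ p k) ∧ (∑ k, p k = 1) ∧ (∀ k, IsDensity (σA k) ∧ IsDensity (σB k)) ∧
    ρ = ∑ k, (p k : ℂ) • (σA k ⊗ₖ σB k)

/-- A finite POVM. -/
def IsPOVM {A ι : Type} [Fintype A] [Fintype ι] [DecidableEq A]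
    (M : ι → Matrix A A ℂ) : Prop :=
  (∀ i, (M i).PosSemidef) ∧ ∑ i, M i = 1

/-- Outcome distribution of a local product measurement. -/
def measProb {A B ι κ : Type} [Fintype A] [Fintype B]
    (M : ι → Matrix A A ℂ) (N : κ → Matrix B B ℂ)
    (ρ : Matrix (A × B) (A × B) ℂ) : ι × κ → ℝ :=
  fun x => (((M x.1 ⊗ₖ N x.2) * ρ).trace).re

/-- Completeness condition for a family of Kraus operators. -/
def IsKraus {A A' ι : Type} [Fintype A] [Fintype A'] [Fintype ι] [DecidableEq A]
    (K : ι → Matrix A' A ℂ) : Prop :=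
  ∑ i, (K i)ᴴ * K i = 1

/-- Action of the product channel Λ_A ⊗ Λ_B (given by Kraus operators) on a bipartite state. -/
def localApply {A B A' B' ι κ : Type} [Fintype A] [Fintype B] [Fintype ι] [Fintype κ]
    (K : ι → Matrix A' A ℂ) (L : κ → Matrix B' B ℂ)
    (ρ : Matrix (A × B) (A × B) ℂ) : Matrix (A' × B') (A' × B') ℂ :=
  ∑ i, ∑ j, (K i ⊗ₖ L j) * ρ * (K i ⊗ₖ L j)ᴴ

/-- Measured relative entropy distance to separable states (with optimization over local POVMs). -/
def measREE {A B : Type} [Fintype A] [Fintype B] [DecidableEq A] [DecidableEq B]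
    (ρ : Matrix (A × B) (A × B) ℂ) : ℝ :=
  sInf {x | ∃ σ : Matrix (A × B) (A × B) ℂ, IsDensity σ ∧ Separable σ ∧
    x = sSup {y | ∃ (m m' : ℕ) (M : Fin m → Matrix A A ℂ) (N : Fin m' → Matrix B B ℂ),
      IsPOVM M ∧ IsPOVM N ∧ y = klDiv (measProb M N ρ) (measProb M N σ)}}

/-!
The relative entropy `D(ρ ‖ σ)` is the Kullback–Leibler divergence of the Nussbaum–Szkoła
distributions `P`, `Q` of the two states, and that divergence is an integral over `t > 0` of the
χ²-type divergences `∑ P² / (Q + t P)`. Each of these is the maximum over `X` of the functional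
`2 Re tr ρX - tr σX*X - t Re tr ρXX*`, which by the Kadison–Schwarz inequality can only grow when
`X` is pulled back along a channel; this gives data processing. Mutual information is
`D(τ ‖ τ_A ⊗ τ_B)`, and a local channel maps `τ_A ⊗ τ_B` to the product of the marginals of the
image of `τ`, so mutual information does not increase under local channels. In the Heisenberg
picture a power of a channel acts factorwise and fixes `1`, hence the powers of `Λ_A` and `Λ_B` map
broadcast copies of `ρ` to broadcast copies of its image under `Λ_A ⊗ Λ_B`. Taking infima, dividing
by `n` and letting `n → ∞` finishes the proof.
-/

/-! ### Classical relative entropy -/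

section Classical

variable {I I' : Type} [Fintype I] [Fintype I']

/-- The divergence `∑ x, P x ^ 2 / (Q x + t * P x)` of chi-squared type. Its integral over `t > 0`
is, up to a logarithmically divergent constant, the relative entropy of `P` and `Q`. -/
def chiDiv (t : ℝ) (P Q : I → ℝ) : ℝ := ∑ x, P x ^ 2 / (Q x + t * P x)

/-- The integral of `chiDiv t P Q` over `0 ≤ t ≤ T`. -/
def chiPrimitive (P Q : I → ℝ) (T : ℝ) : ℝ := ∑ x, P x * Real.log (1 + T * (P x / Q x))

variable {P Q : I → ℝ} {P' Q' : I' → ℝ}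

lemma chiPrimitive_zero : chiPrimitive P Q 0 = 0 := by simp [chiPrimitive]

lemma hasDerivAt_chiPrimitive (hP : ∀ x, 0 ≤ P x) (hQ : ∀ x, 0 ≤ Q x)
    (hPQ : ∀ x, Q x = 0 → P x = 0) {T : ℝ} (hT : 0 ≤ T) :
    HasDerivAt (chiPrimitive P Q) (chiDiv T P Q) T := by
  refine HasDerivAt.fun_sum fun x _ => ?_
  obtain hQx | hQx := (hQ x).eq_or_lt
  · simpa [hPQ x hQx.symm] using hasDerivAt_const T (0 : ℝ)
  · have hpos : 0 < 1 + T * (P x / Q x) := by have := hP x; positivity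
    have hlin : HasDerivAt (fun s => 1 + s * (P x / Q x)) (P x / Q x) T := by
      simpa using ((hasDerivAt_id T).mul_const (P x / Q x)).const_add 1
    have hterm : P x ^ 2 / (Q x + T * P x) = P x * (P x / Q x / (1 + T * (P x / Q x))) := by
      field_simp
    exact hterm ▸ (hlin.log hpos.ne').const_mul (P x)

lemma tendsto_chiPrimitive_sub_log (hP : ∀ x, 0 ≤ P x) (hQ : ∀ x, 0 ≤ Q x)
    (hPQ : ∀ x, Q x = 0 → P x = 0) :
    Tendsto (fun T => chiPrimitive P Q T - (∑ x, P x) * Real.log T) atTop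
      (𝓝 (Real.log 2 * klDiv P Q)) := by
  simp only [chiPrimitive, klDiv, Finset.sum_mul, Finset.mul_sum, ← Finset.sum_sub_distrib]
  refine tendsto_finsetSum _ fun x _ => ?_
  obtain hPx | hPx := (hP x).eq_or_lt
  · simp [← hPx]
  have hr : 0 < P x / Q x := div_pos hPx ((hQ x).lt_of_ne fun h => hPx.ne' (hPQ x h.symm))
  have hlim : Tendsto (fun T : ℝ => P x * Real.log (T⁻¹ + P x / Q x)) atTop
      (𝓝 (P x * Real.log (P x / Q x))) := by
    have h := (tendsto_inv_atTop_zero (𝕜 := ℝ)).add_const (P x / Q x)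
    rw [zero_add] at h
    exact (h.log hr.ne').const_mul _
  have hlogb : Real.log 2 * (P x * Real.logb 2 (P x / Q x)) = P x * Real.log (P x / Q x) := by
    rw [mul_left_comm, ← Real.log_div_log, mul_div_cancel₀ _ (Real.log_pos one_lt_two).ne']
  rw [hlogb]
  refine hlim.congr' ?_
  filter_upwards [eventually_gt_atTop 0] with T hT
  have hfactor : 1 + T * (P x / Q x) = T * (T⁻¹ + P x / Q x) := by field_simp
  rw [hfactor, Real.log_mul hT.ne' (by positivity)]
  ring

theorem klDiv_le_klDiv_of_chiDiv_le (hP : ∀ x, 0 ≤ P x) (hQ : ∀ x, 0 ≤ Q x)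
    (hPQ : ∀ x, Q x = 0 → P x = 0) (hP' : ∀ x, 0 ≤ P' x) (hQ' : ∀ x, 0 ≤ Q' x)
    (hPQ' : ∀ x, Q' x = 0 → P' x = 0) (hsum : ∑ x, P' x = ∑ x, P x)
    (hchi : ∀ t, 0 < t → chiDiv t P' Q' ≤ chiDiv t P Q) : klDiv P' Q' ≤ klDiv P Q := by
  have hderiv : ∀ t, 0 ≤ t → HasDerivAt (fun t => chiPrimitive P Q t - chiPrimitive P' Q' t)
      (chiDiv t P Q - chiDiv t P' Q') t := fun t ht =>
    (hasDerivAt_chiPrimitive hP hQ hPQ ht).sub (hasDerivAt_chiPrimitive hP' hQ' hPQ' ht)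
  have hmono : MonotoneOn (fun t => chiPrimitive P Q t - chiPrimitive P' Q' t) (Set.Ici 0) := by
    refine monotoneOn_of_deriv_nonneg (convex_Ici 0)
      (fun t ht => (hderiv t ht).continuousAt.continuousWithinAt) ?_ ?_ <;>
      rw [interior_Ici] <;> intro t ht
    · exact (hderiv t (le_of_lt ht)).differentiableAt.differentiableWithinAt
    · rw [(hderiv t (le_of_lt ht)).deriv]
      exact sub_nonneg.2 (hchi t ht)
  refine le_of_mul_le_mul_left ?_ (Real.log_pos one_lt_two)
  refine le_of_tendsto_of_tendsto (tendsto_chiPrimitive_sub_log hP' hQ' hPQ')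
    (tendsto_chiPrimitive_sub_log hP hQ hPQ) ?_
  filter_upwards [eventually_ge_atTop 0] with T hT
  have hT0 := hmono Set.self_mem_Ici hT hT
  simp only [chiPrimitive_zero, sub_zero] at hT0
  rw [hsum]
  linarith

end Classical

section Marginals

variable {A B : Type}

lemma eq_zero_of_margA_eq_zero [Fintype B] {r : A × B → ℝ} (hr : ∀ x, 0 ≤ r x) {x : A × B}
    (h : margA r x.1 = 0) : r x = 0 :=
  (Finset.sum_eq_zero_iff_of_nonneg fun b _ => hr (x.1, b)).1 h x.2 (Finset.mem_univ _)

lemma eq_zero_of_margB_eq_zero [Fintype A] {r : A × B → ℝ} (hr : ∀ x, 0 ≤ r x) {x : A × B}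
    (h : margB r x.2 = 0) : r x = 0 :=
  (Finset.sum_eq_zero_iff_of_nonneg fun a _ => hr (a, x.2)).1 h x.1 (Finset.mem_univ _)

lemma eq_zero_of_margA_mul_margB_eq_zero [Fintype A] [Fintype B] {r : A × B → ℝ}
    (hr : ∀ x, 0 ≤ r x) {x : A × B} (h : margA r x.1 * margB r x.2 = 0) : r x = 0 :=
  (mul_eq_zero.1 h).elim (eq_zero_of_margA_eq_zero hr) (eq_zero_of_margB_eq_zero hr)

lemma sum_mul_logb_margA_mul_margB [Fintype A] [Fintype B] {r : A × B → ℝ} (hr : ∀ x, 0 ≤ r x) :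
    ∑ x, r x * Real.logb 2 (margA r x.1 * margB r x.2) =
      -shannon (margA r) - shannon (margB r) := by
  have hsplit : ∀ x, r x * Real.logb 2 (margA r x.1 * margB r x.2) =
      r x * Real.logb 2 (margA r x.1) + r x * Real.logb 2 (margB r x.2) := fun x => by
    by_cases h : margA r x.1 * margB r x.2 = 0
    · simp [eq_zero_of_margA_mul_margB_eq_zero hr h]
    · rw [Real.logb_mul (left_ne_zero_of_mul h) (right_ne_zero_of_mul h), mul_add]
  simp only [hsplit, Finset.sum_add_distrib, shannon, neg_neg, sub_neg_eq_add]
  congr 1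
  · simp only [Fintype.sum_prod_type, margA, Finset.sum_mul]
  · simp only [Fintype.sum_prod_type_right, margB, Finset.sum_mul]

end Marginals

/-! ### Kraus maps -/

section Positivity

variable {n : Type*} [Fintype n]

open scoped MatrixOrder in
lemma trace_mul_re_nonneg {ρ M : Matrix n n ℂ} (hρ : ρ.PosSemidef) (hM : M.PosSemidef) :
    0 ≤ (ρ * M).trace.re := by
  classical
  obtain ⟨S, rfl⟩ := CStarAlgebra.nonneg_iff_eq_star_mul_self.1 hM.nonneg
  rw [star_eq_conjTranspose, ← Matrix.mul_assoc, trace_mul_comm, ← Matrix.mul_assoc]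
  exact (Complex.le_def.1 (hρ.mul_mul_conjTranspose_same S).trace_nonneg).1

lemma trace_mul_re_le_trace_mul_re {ρ M N : Matrix n n ℂ} (hρ : ρ.PosSemidef)
    (hMN : (N - M).PosSemidef) : (ρ * M).trace.re ≤ (ρ * N).trace.re := by
  have h := trace_mul_re_nonneg hρ hMN
  rwa [Matrix.mul_sub, trace_sub, Complex.sub_re, sub_nonneg] at h

end Positivity

section Kraus

variable {m n ι : Type*} [Fintype ι]

/-- The completely positive map with Kraus operators `K`, acting on states. -/
def krausMap [Fintype n] (K : ι → Matrix m n ℂ) (ρ : Matrix n n ℂ) : Matrix m m ℂ :=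
  ∑ k, K k * ρ * (K k)ᴴ

lemma posSemidef_krausMap [Finite m] [Fintype n] {K : ι → Matrix m n ℂ} {ρ : Matrix n n ℂ}
    (hρ : ρ.PosSemidef) : (krausMap K ρ).PosSemidef :=
  posSemidef_sum _ fun k _ => hρ.mul_mul_conjTranspose_same (K k)

variable [Fintype m]

/-- The adjoint of `krausMap K` for the trace pairing, acting on observables. -/
def krausAdjoint (K : ι → Matrix m n ℂ) (X : Matrix m m ℂ) : Matrix n n ℂ :=
  ∑ k, (K k)ᴴ * X * K k

lemma trace_krausMap_mul [Fintype n] (K : ι → Matrix m n ℂ) (ρ : Matrix n n ℂ) (X : Matrix m m ℂ) :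
    (krausMap K ρ * X).trace = (ρ * krausAdjoint K X).trace := by
  simp only [krausMap, krausAdjoint, Finset.sum_mul, Finset.mul_sum, trace_sum]
  refine Finset.sum_congr rfl fun k _ => ?_
  rw [Matrix.mul_assoc (K k * ρ), Matrix.mul_assoc (K k), trace_mul_comm]
  simp only [Matrix.mul_assoc]

lemma krausAdjoint_conjTranspose (K : ι → Matrix m n ℂ) (X : Matrix m m ℂ) :
    krausAdjoint K Xᴴ = (krausAdjoint K X)ᴴ := by
  simp only [krausAdjoint, conjTranspose_sum, conjTranspose_mul, conjTranspose_conjTranspose,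
    Matrix.mul_assoc]

end Kraus

lemma isKraus_iff_krausAdjoint_one {m n ι : Type} [Fintype m] [Fintype n] [Fintype ι]
    [DecidableEq m] [DecidableEq n] {K : ι → Matrix m n ℂ} :
    IsKraus K ↔ krausAdjoint K 1 = 1 := by
  simp only [IsKraus, krausAdjoint, Matrix.mul_one]

namespace IsKraus

variable {m n ι : Type} [Fintype m] [Fintype n] [Fintype ι] [DecidableEq n]
  {K : ι → Matrix m n ℂ}

lemma krausAdjoint_one [DecidableEq m] (hK : IsKraus K) : krausAdjoint K 1 = 1 :=
  isKraus_iff_krausAdjoint_one.1 hK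

lemma trace_krausMap (hK : IsKraus K) (ρ : Matrix n n ℂ) :
    (krausMap K ρ).trace = ρ.trace := by
  classical
  rw [← Matrix.mul_one (krausMap K ρ), trace_krausMap_mul, hK.krausAdjoint_one, Matrix.mul_one]

lemma isDensity_krausMap (hK : IsKraus K) {ρ : Matrix n n ℂ} (hρ : IsDensity ρ) :
    IsDensity (krausMap K ρ) :=
  ⟨posSemidef_krausMap hρ.1, (hK.trace_krausMap ρ).trans hρ.2⟩

/-- **Kadison–Schwarz inequality**. -/
lemma posSemidef_krausAdjoint_sub (hK : IsKraus K) (X : Matrix m m ℂ) :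
    (krausAdjoint K (Xᴴ * X) - (krausAdjoint K X)ᴴ * krausAdjoint K X).PosSemidef := by
  set Z := krausAdjoint K X
  have hsum : krausAdjoint K (Xᴴ * X) - Zᴴ * Z =
      ∑ k, (X * K k - K k * Z)ᴴ * (X * K k - K k * Z) := by
    have hZZ : ∑ k, (K k * Z)ᴴ * (K k * Z) = Zᴴ * Z := by
      calc ∑ k, (K k * Z)ᴴ * (K k * Z) = Zᴴ * (∑ k, (K k)ᴴ * K k) * Z := by
            simp only [Finset.mul_sum, Finset.sum_mul, conjTranspose_mul, Matrix.mul_assoc]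
        _ = Zᴴ * Z := by rw [hK, Matrix.mul_one]
    have hcross : ∑ k, (K k * Z)ᴴ * (X * K k) = Zᴴ * Z := by
      calc ∑ k, (K k * Z)ᴴ * (X * K k) = Zᴴ * ∑ k, (K k)ᴴ * X * K k := by
            simp only [Finset.mul_sum, conjTranspose_mul, Matrix.mul_assoc]
        _ = Zᴴ * Z := rfl
    have hcross' : ∑ k, (X * K k)ᴴ * (K k * Z) = Zᴴ * Z := by
      simpa only [conjTranspose_sum, conjTranspose_mul, conjTranspose_conjTranspose] using
        congrArg conjTranspose hcross
    have hXX : ∑ k, (X * K k)ᴴ * (X * K k) = krausAdjoint K (Xᴴ * X) := by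
      simp only [krausAdjoint, conjTranspose_mul, Matrix.mul_assoc]
    simp only [conjTranspose_sub, Matrix.sub_mul, Matrix.mul_sub, Finset.sum_sub_distrib,
      hZZ, hcross, hcross', hXX]
    abel
  rw [hsum]
  exact posSemidef_sum _ fun k _ => posSemidef_conjTranspose_mul_self _

end IsKraus

/-! ### Spectral decompositions -/

section Spectral

variable {n : Type*} [Fintype n] [DecidableEq n]

/-- The Hermitian matrix with spectral decomposition `U * diagonal p * Uᴴ`. -/
def spectralMatrix (U : unitaryGroup n ℂ) (p : n → ℝ) : Matrix n n ℂ :=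
  Unitary.conjStarAlgAut ℂ _ U (diagonal (RCLike.ofReal ∘ p))

lemma spectralMatrix_eq (U : unitaryGroup n ℂ) (p : n → ℝ) :
    spectralMatrix U p = U * diagonal (fun i => (p i : ℂ)) * (U : Matrix n n ℂ)ᴴ := rfl

lemma spectralMatrix_mul (U : unitaryGroup n ℂ) (p q : n → ℝ) :
    spectralMatrix U p * spectralMatrix U q = spectralMatrix U (p * q) := by
  rw [spectralMatrix, spectralMatrix, ← map_mul, diagonal_mul_diagonal, spectralMatrix]
  exact congrArg (Unitary.conjStarAlgAut ℂ _ U ∘ diagonal) <|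
    funext fun i => (RCLike.ofReal_mul (p i) (q i)).symm

lemma spectralMatrix_one (U : unitaryGroup n ℂ) : spectralMatrix U 1 = 1 := by
  have h : diagonal ((RCLike.ofReal : ℝ → ℂ) ∘ (1 : n → ℝ)) = 1 :=
    congrArg diagonal (funext fun _ => RCLike.ofReal_one)
  rw [spectralMatrix, h, map_one]

lemma isHermitian_spectralMatrix (U : unitaryGroup n ℂ) (p : n → ℝ) :
    (spectralMatrix U p).IsHermitian :=
  isHermitian_mul_mul_conjTranspose _ <|
    isHermitian_diagonal_of_self_adjoint _ (funext fun i => Complex.conj_ofReal (p i))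

lemma posSemidef_spectralMatrix (U : unitaryGroup n ℂ) {p : n → ℝ} (hp : ∀ i, 0 ≤ p i) :
    (spectralMatrix U p).PosSemidef :=
  (PosSemidef.diagonal fun i => by simpa using hp i).mul_mul_conjTranspose_same _

lemma eq_spectralMatrix {ρ : Matrix n n ℂ} (hρ : ρ.IsHermitian) :
    ρ = spectralMatrix hρ.eigenvectorUnitary hρ.eigenvalues :=
  hρ.spectral_theorem

lemma exists_eq_spectralMatrix {ρ : Matrix n n ℂ} (hρ : ρ.PosSemidef) :
    ∃ U p, (∀ i, 0 ≤ p i) ∧ ρ = spectralMatrix U p :=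
  ⟨_, _, hρ.eigenvalues_nonneg, eq_spectralMatrix hρ.isHermitian⟩

lemma spectralMatrix_eq_spectralMatrix_iff {U W : unitaryGroup n ℂ} {p q : n → ℝ} :
    spectralMatrix U p = spectralMatrix W q ↔
      ∀ i j, ((W⁻¹ * U : unitaryGroup n ℂ) i j) * p j = q i * (W⁻¹ * U : unitaryGroup n ℂ) i j := by
  have hconj : spectralMatrix U p = spectralMatrix W q ↔
      spectralMatrix (W⁻¹ * U) p = diagonal (RCLike.ofReal ∘ q) := by
    rw [spectralMatrix, spectralMatrix, spectralMatrix, map_mul, map_inv]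
    exact (StarAlgEquiv.symm_apply_eq (Unitary.conjStarAlgAut ℂ (Matrix n n ℂ) W)).symm
  rw [hconj]
  refine (Units.mul_inv_eq_iff_eq_mul (Unitary.toUnits (W⁻¹ * U))).trans ?_
  simp only [← Matrix.ext_iff, mul_diagonal, diagonal_mul]
  rfl

/-- The overlap matrix of the two eigenbases intertwines `p` and `q`, hence also `f ∘ p` and
`f ∘ q`. -/
lemma spectralMatrix_comp_congr {U W : unitaryGroup n ℂ} {p q : n → ℝ}
    (h : spectralMatrix U p = spectralMatrix W q) (f : ℝ → ℝ) :
    spectralMatrix U (f ∘ p) = spectralMatrix W (f ∘ q) := by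
  rw [spectralMatrix_eq_spectralMatrix_iff] at h ⊢
  intro i j
  have hij := h i j
  rw [mul_comm, mul_eq_mul_right_iff] at hij ⊢
  exact hij.imp_left fun hpq => congrArg (RCLike.ofReal ∘ f) (Complex.ofReal_injective hpq)

lemma cfc_spectralMatrix (U : unitaryGroup n ℂ) (p : n → ℝ) (f : ℝ → ℝ) :
    cfc f (spectralMatrix U p) = spectralMatrix U (f ∘ p) := by
  have hherm := isHermitian_spectralMatrix U p
  rw [hherm.cfc_eq]
  exact (spectralMatrix_comp_congr hherm.spectral_theorem f).symm

lemma trace_mul_spectralMatrix (X : Matrix n n ℂ) (U : unitaryGroup n ℂ) (p : n → ℝ) :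
    (X * spectralMatrix U p).trace =
      ∑ i, ((U : Matrix n n ℂ)ᴴ * X * (U : Matrix n n ℂ)) i i * p i := by
  rw [spectralMatrix_eq, ← Matrix.mul_assoc, trace_mul_comm, ← Matrix.mul_assoc,
    ← Matrix.mul_assoc]
  simp only [trace, diag_apply, mul_diagonal]

lemma trace_spectralMatrix (U : unitaryGroup n ℂ) (p : n → ℝ) :
    (spectralMatrix U p).trace = ∑ i, (p i : ℂ) := by
  have hU : (U : Matrix n n ℂ)ᴴ * U = 1 := UnitaryGroup.star_mul_self U
  simp only [spectralMatrix_eq, trace_mul_comm _ (U : Matrix n n ℂ)ᴴ, ← Matrix.mul_assoc, hU,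
    Matrix.one_mul, trace_diagonal]

end Spectral

/-! ### Quantum relative entropy -/

section RelEntropy

variable {n : Type} [Fintype n] [DecidableEq n]

/-- The relative entropy `D(ρ ‖ σ) = tr ρ (log ρ - log σ)`, to base 2. As `Real.logb 2 0 = 0`, this
is the usual value when the support of `ρ` is contained in that of `σ`, and a junk value (instead
of `∞`) otherwise. -/
def relEntropy (ρ σ : Matrix n n ℂ) : ℝ :=
  (ρ * (cfc (Real.logb 2) ρ - cfc (Real.logb 2) σ)).trace.re

/-- For Hermitian matrices, the support of `ρ` is contained in that of `σ`. -/
def SupportLE (ρ σ : Matrix n n ℂ) : Prop := ∀ v : n → ℂ, σ *ᵥ v = 0 → ρ *ᵥ v = 0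

/-- For `ρ = spectralMatrix U p` and any `σ` diagonal in the basis `V`, the first of the two
distributions of Nussbaum and Szkoła, which represent pairs of states by pairs of classical
distributions with the same relative entropy. -/
def nussbaumFst (U V : unitaryGroup n ℂ) (p : n → ℝ) : n × n → ℝ :=
  fun x => Complex.normSq ((V⁻¹ * U : unitaryGroup n ℂ) x.1 x.2) * p x.2

/-- For `σ = spectralMatrix V q` and any `ρ` diagonal in the basis `U`, the second distribution of
Nussbaum and Szkoła; see `nussbaumFst`. -/
def nussbaumSnd (U V : unitaryGroup n ℂ) (q : n → ℝ) : n × n → ℝ :=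
  fun x => Complex.normSq ((V⁻¹ * U : unitaryGroup n ℂ) x.1 x.2) * q x.1

variable (U V : unitaryGroup n ℂ) {p q : n → ℝ}

lemma conj_spectralMatrix_apply_self (p : n → ℝ) (j : n) :
    ((V : Matrix n n ℂ)ᴴ * spectralMatrix U p * (V : Matrix n n ℂ)) j j =
      ∑ i, (nussbaumFst U V p (j, i) : ℂ) := by
  have hconj : (V : Matrix n n ℂ)ᴴ * spectralMatrix U p * (V : Matrix n n ℂ) =
      (V⁻¹ * U : unitaryGroup n ℂ) * diagonal (fun i => (p i : ℂ)) *
        ((V⁻¹ * U : unitaryGroup n ℂ) : Matrix n n ℂ)ᴴ := by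
    simp only [spectralMatrix_eq, UnitaryGroup.mul_val, UnitaryGroup.inv_val, star_eq_conjTranspose,
      conjTranspose_mul, conjTranspose_conjTranspose, Matrix.mul_assoc]
  rw [hconj, mul_apply]
  refine Finset.sum_congr rfl fun i _ => ?_
  rw [mul_diagonal, conjTranspose_apply, nussbaumFst, Complex.ofReal_mul,
    Complex.normSq_eq_conj_mul_self, starRingEnd_apply]
  ring

lemma trace_spectralMatrix_mul_spectralMatrix (p f : n → ℝ) :
    (spectralMatrix U p * spectralMatrix V f).trace =
      ((∑ x, nussbaumFst U V p x * f x.1 : ℝ) : ℂ) := by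
  simp only [trace_mul_spectralMatrix, conj_spectralMatrix_apply_self, Finset.sum_mul,
    Fintype.sum_prod_type, Complex.ofReal_sum, Complex.ofReal_mul]

lemma sum_nussbaumFst (p : n → ℝ) :
    ∑ x, nussbaumFst U V p x = (spectralMatrix U p).trace.re := by
  have h := trace_spectralMatrix_mul_spectralMatrix U V p 1
  rw [spectralMatrix_one, Matrix.mul_one] at h
  rw [h, Complex.ofReal_re]
  simp only [Pi.one_apply, mul_one]

lemma nussbaumFst_nonneg (hp : ∀ i, 0 ≤ p i) (x : n × n) : 0 ≤ nussbaumFst U V p x :=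
  mul_nonneg (Complex.normSq_nonneg _) (hp _)

lemma nussbaumSnd_nonneg (hq : ∀ i, 0 ≤ q i) (x : n × n) : 0 ≤ nussbaumSnd U V q x :=
  mul_nonneg (Complex.normSq_nonneg _) (hq _)

lemma spectralMatrix_mul_self (q : n → ℝ) :
    spectralMatrix V q * V = (V : Matrix n n ℂ) * diagonal (fun i => (q i : ℂ)) := by
  have hV : (V : Matrix n n ℂ)ᴴ * V = 1 := UnitaryGroup.star_mul_self V
  rw [spectralMatrix_eq, Matrix.mul_assoc, hV, Matrix.mul_one]

lemma supportLE_spectralMatrix_iff {ρ : Matrix n n ℂ} (hρ : ρ.PosSemidef) :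
    SupportLE ρ (spectralMatrix V q) ↔
      ∀ j, q j = 0 → ((V : Matrix n n ℂ)ᴴ * ρ * (V : Matrix n n ℂ)) j j = 0 := by
  have hV : (V : Matrix n n ℂ)ᴴ * V = 1 := UnitaryGroup.star_mul_self V
  have hdiag : ∀ j, ((V : Matrix n n ℂ)ᴴ * ρ * (V : Matrix n n ℂ)) j j = 0 ↔
      ρ *ᵥ (V : Matrix n n ℂ).col j = 0 := fun j => by
    rw [← hρ.dotProduct_mulVec_zero_iff, dotProduct_mulVec]
    rfl
  simp only [hdiag]
  constructor
  · intro h j hj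
    refine h _ (funext fun i => ?_)
    have hcol := congrFun (congrFun (spectralMatrix_mul_self V q) i) j
    rwa [mul_diagonal, hj, Complex.ofReal_zero, mul_zero] at hcol
  · intro h v hv
    obtain ⟨y, rfl⟩ : ∃ y, v = (V : Matrix n n ℂ) *ᵥ y :=
      ⟨(V : Matrix n n ℂ)ᴴ *ᵥ v, by rw [mulVec_mulVec, mul_eq_one_comm.1 hV, one_mulVec]⟩
    have hqy : ∀ j, (q j : ℂ) * y j = 0 := fun j => by
      have h0 := congrArg ((V : Matrix n n ℂ)ᴴ *ᵥ ·) hv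
      simp only [mulVec_mulVec, spectralMatrix_mul_self, ← Matrix.mul_assoc, hV, Matrix.one_mul,
        mulVec_zero] at h0
      exact (mulVec_diagonal _ _ j).symm.trans (congrFun h0 j)
    rw [mulVec_mulVec, mulVec_eq_sum]
    refine Finset.sum_eq_zero fun j _ => ?_
    obtain hq | hy := mul_eq_zero.1 (hqy j)
    · have hcol : (ρ * (V : Matrix n n ℂ))ᵀ j = 0 := h j (Complex.ofReal_eq_zero.1 hq)
      rw [hcol, smul_zero]
    · rw [hy]
      exact zero_smul _ _

lemma nussbaumFst_eq_zero (hρσ : SupportLE (spectralMatrix U p) (spectralMatrix V q))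
    (hp : ∀ i, 0 ≤ p i) {x : n × n} (hx : nussbaumSnd U V q x = 0) : nussbaumFst U V p x = 0 := by
  obtain hC | hq := mul_eq_zero.1 hx
  · rw [nussbaumFst, hC, zero_mul]
  have hsum := (supportLE_spectralMatrix_iff V (posSemidef_spectralMatrix U hp)).1 hρσ x.1 hq
  rw [conj_spectralMatrix_apply_self, ← Complex.ofReal_sum, Complex.ofReal_eq_zero] at hsum
  exact (Finset.sum_eq_zero_iff_of_nonneg fun i _ => nussbaumFst_nonneg U V hp _).1 hsum x.2
    (Finset.mem_univ _)

theorem relEntropy_spectralMatrix (hρσ : SupportLE (spectralMatrix U p) (spectralMatrix V q))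
    (hp : ∀ i, 0 ≤ p i) :
    relEntropy (spectralMatrix U p) (spectralMatrix V q) =
      klDiv (nussbaumFst U V p) (nussbaumSnd U V q) := by
  have hself : (spectralMatrix U p * spectralMatrix U (Real.logb 2 ∘ p)).trace =
      ((∑ x, nussbaumFst U V p x * Real.logb 2 (p x.2) : ℝ) : ℂ) := by
    rw [spectralMatrix_mul, ← Matrix.mul_one (spectralMatrix U _), ← spectralMatrix_one V,
      trace_spectralMatrix_mul_spectralMatrix]
    simp only [nussbaumFst, Pi.mul_apply, Pi.one_apply, Function.comp_apply, mul_one, mul_assoc]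
  rw [relEntropy, cfc_spectralMatrix, cfc_spectralMatrix, Matrix.mul_sub, trace_sub, hself,
    trace_spectralMatrix_mul_spectralMatrix, ← Complex.ofReal_sub, Complex.ofReal_re, klDiv,
    ← Finset.sum_sub_distrib]
  refine Finset.sum_congr rfl fun x _ => ?_
  by_cases hP : nussbaumFst U V p x = 0
  · simp [hP]
  have hQ : nussbaumSnd U V q x ≠ 0 := fun h => hP (nussbaumFst_eq_zero U V hρσ hp h)
  rw [← mul_sub, Function.comp_apply, ← Real.logb_div (right_ne_zero_of_mul hP)
    (right_ne_zero_of_mul hQ), nussbaumFst, nussbaumSnd,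
    mul_div_mul_left _ _ (left_ne_zero_of_mul hP)]

end RelEntropy

/-! ### Data processing -/

section DataProcessing

variable {m n ι : Type} [Fintype m] [Fintype n] [Fintype ι]

lemma supportLE_krausMap {ρ σ : Matrix n n ℂ} (hσ : σ.PosSemidef)
    (hρσ : SupportLE ρ σ) (K : ι → Matrix m n ℂ) :
    SupportLE (krausMap K ρ) (krausMap K σ) := by
  intro v hv
  have hform : ∑ k, star ((K k)ᴴ *ᵥ v) ⬝ᵥ σ *ᵥ (K k)ᴴ *ᵥ v = 0 := by
    calc ∑ k, star ((K k)ᴴ *ᵥ v) ⬝ᵥ σ *ᵥ (K k)ᴴ *ᵥ v = star v ⬝ᵥ krausMap K σ *ᵥ v := by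
          simp only [krausMap, sum_mulVec, dotProduct_sum, star_mulVec, conjTranspose_conjTranspose,
            dotProduct_mulVec, vecMul_vecMul, Matrix.mul_assoc]
      _ = 0 := by rw [hv, dotProduct_zero]
  have hker : ∀ k, σ *ᵥ (K k)ᴴ *ᵥ v = 0 := fun k =>
    (hσ.dotProduct_mulVec_zero_iff _).1 <|
      (Finset.sum_eq_zero_iff_of_nonneg fun k _ => hσ.dotProduct_mulVec_nonneg _).1 hform k
        (Finset.mem_univ k)
  simp only [krausMap, sum_mulVec, Matrix.mul_assoc, ← mulVec_mulVec, hρσ _ (hker _),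
    mulVec_zero, Finset.sum_const_zero]

/-- The concave quadratic functional of an observable `X` whose maximum is the divergence `chiDiv t`
of the Nussbaum–Szkoła distributions of `ρ` and `σ`; see `isGreatest_chiFunctional`. -/
def chiFunctional (t : ℝ) (ρ σ X : Matrix n n ℂ) : ℝ :=
  2 * (ρ * X).trace.re - (σ * (Xᴴ * X)).trace.re - t * (ρ * (X * Xᴴ)).trace.re

/-- Completing the square in `y`; for `q + t * p = 0` both sides vanish. -/
lemma two_mul_re_mul_sub_eq {t p q : ℝ} (ht : 0 < t) (hp : 0 ≤ p) (hq : 0 ≤ q) (c y : ℂ) :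
    2 * (y * c).re * p - (q + t * p) * Complex.normSq y =
      (Complex.normSq c * p) ^ 2 / (Complex.normSq c * q + t * (Complex.normSq c * p)) -
        (q + t * p) * Complex.normSq (y - (starRingEnd ℂ) c * (p / (q + t * p) : ℝ)) := by
  obtain hs | hs := (by positivity : 0 ≤ q + t * p).eq_or_lt
  · have hp0 : p = 0 := by nlinarith
    have hq0 : q = 0 := by nlinarith
    simp [hp0, hq0]
  have hfrac : (Complex.normSq c * p) ^ 2 / (Complex.normSq c * q + t * (Complex.normSq c * p)) =
      Complex.normSq c * p ^ 2 / (q + t * p) := by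
    by_cases hc : Complex.normSq c = 0
    · simp [hc]
    · field_simp
  rw [hfrac, Complex.normSq_sub, Complex.normSq_mul, Complex.normSq_conj, Complex.normSq_ofReal]
  simp only [map_mul, Complex.conj_conj, Complex.conj_ofReal, ← mul_assoc, Complex.re_mul_ofReal]
  generalize q + t * p = s at hs
  field_simp
  ring

lemma chiFunctional_spectralMatrix [DecidableEq n] (U V : unitaryGroup n ℂ) (p q : n → ℝ) (t : ℝ)
    (Y : Matrix n n ℂ) :
    chiFunctional t (spectralMatrix U p) (spectralMatrix V q)
        ((U : Matrix n n ℂ) * Y * (V : Matrix n n ℂ)ᴴ) =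
      ∑ x : n × n, (2 * (Y x.2 x.1 * (V⁻¹ * U : unitaryGroup n ℂ) x.1 x.2).re * p x.2 -
        (q x.1 + t * p x.2) * Complex.normSq (Y x.2 x.1)) := by
  have hU : (U : Matrix n n ℂ)ᴴ * U = 1 := UnitaryGroup.star_mul_self U
  have hV : (V : Matrix n n ℂ)ᴴ * V = 1 := UnitaryGroup.star_mul_self V
  set X := (U : Matrix n n ℂ) * Y * (V : Matrix n n ℂ)ᴴ with hX
  have hρX : (U : Matrix n n ℂ)ᴴ * X * U = Y * (V⁻¹ * U : unitaryGroup n ℂ) := by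
    simp only [hX, ← Matrix.mul_assoc, hU, Matrix.one_mul]
    rw [Matrix.mul_assoc]
    rfl
  have hσX : (V : Matrix n n ℂ)ᴴ * (Xᴴ * X) * V = Yᴴ * Y := by
    simp only [hX, conjTranspose_mul, conjTranspose_conjTranspose, ← Matrix.mul_assoc, hV,
      Matrix.one_mul]
    rw [Matrix.mul_assoc _ (V : Matrix n n ℂ)ᴴ, hV, Matrix.mul_one, Matrix.mul_assoc Yᴴ, hU,
      Matrix.mul_one]
  have hρXX : (U : Matrix n n ℂ)ᴴ * (X * Xᴴ) * U = Y * Yᴴ := by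
    simp only [hX, conjTranspose_mul, conjTranspose_conjTranspose, ← Matrix.mul_assoc, hU,
      Matrix.one_mul]
    rw [Matrix.mul_assoc _ (U : Matrix n n ℂ)ᴴ, hU, Matrix.mul_one, Matrix.mul_assoc Y, hV,
      Matrix.mul_one]
  rw [chiFunctional, trace_mul_comm, trace_mul_comm (spectralMatrix V q),
    trace_mul_comm (spectralMatrix U p), trace_mul_spectralMatrix, trace_mul_spectralMatrix,
    trace_mul_spectralMatrix, hρX, hσX, hρXX]
  have hnormSq : ∀ z : ℂ, (z * star z).re = Complex.normSq z := fun z => by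
    rw [← starRingEnd_apply, Complex.mul_conj, Complex.ofReal_re]
  simp only [mul_apply, conjTranspose_apply, Complex.re_sum, Complex.re_mul_ofReal, hnormSq,
    mul_comm (star _)]
  simp only [add_mul, Finset.sum_sub_distrib, ← sub_sub]
  congr 1
  · congr 1
    · simp only [Fintype.sum_prod_type_right, Finset.mul_sum, Finset.sum_mul, mul_assoc]
    · simp only [Fintype.sum_prod_type, Finset.sum_mul, mul_comm (q _)]
  · simp only [Fintype.sum_prod_type_right, Finset.mul_sum, Finset.sum_mul, mul_assoc,
      mul_comm (p _)]

lemma isGreatest_chiFunctional [DecidableEq n] (U V : unitaryGroup n ℂ) {p q : n → ℝ}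
    (hp : ∀ i, 0 ≤ p i) (hq : ∀ i, 0 ≤ q i) {t : ℝ} (ht : 0 < t) :
    IsGreatest (Set.range (chiFunctional t (spectralMatrix U p) (spectralMatrix V q)))
      (chiDiv t (nussbaumFst U V p) (nussbaumSnd U V q)) := by
  have hU : (U : Matrix n n ℂ) * (U : Matrix n n ℂ)ᴴ = 1 :=
    mul_eq_one_comm.1 (UnitaryGroup.star_mul_self U)
  have hV : (V : Matrix n n ℂ) * (V : Matrix n n ℂ)ᴴ = 1 :=
    mul_eq_one_comm.1 (UnitaryGroup.star_mul_self V)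
  constructor
  · refine ⟨U * (of fun i j => (starRingEnd ℂ) ((V⁻¹ * U : unitaryGroup n ℂ) j i) *
      (p i / (q j + t * p i) : ℝ)) * (V : Matrix n n ℂ)ᴴ, ?_⟩
    rw [chiFunctional_spectralMatrix, chiDiv]
    refine Finset.sum_congr rfl fun x _ => ?_
    rw [two_mul_re_mul_sub_eq ht (hp _) (hq _), of_apply, sub_self, map_zero, mul_zero, sub_zero]
    rfl
  · rintro _ ⟨X, rfl⟩
    obtain ⟨Y, rfl⟩ : ∃ Y, X = U * Y * (V : Matrix n n ℂ)ᴴ :=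
      ⟨(U : Matrix n n ℂ)ᴴ * X * V, by
        simp only [← Matrix.mul_assoc, hU, Matrix.one_mul]
        rw [Matrix.mul_assoc, hV, Matrix.mul_one]⟩
    rw [chiFunctional_spectralMatrix, chiDiv]
    refine Finset.sum_le_sum fun x _ => ?_
    rw [two_mul_re_mul_sub_eq ht (hp _) (hq _)]
    have := hp x.2
    have := hq x.1
    exact sub_le_self _ (mul_nonneg (by positivity) (Complex.normSq_nonneg _))

variable [DecidableEq n] {K : ι → Matrix m n ℂ} {ρ σ : Matrix n n ℂ}

lemma IsKraus.chiFunctional_krausMap_le (hK : IsKraus K) (hρ : ρ.PosSemidef) (hσ : σ.PosSemidef)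
    {t : ℝ} (ht : 0 ≤ t) (X : Matrix m m ℂ) :
    chiFunctional t (krausMap K ρ) (krausMap K σ) X ≤ chiFunctional t ρ σ (krausAdjoint K X) := by
  have hσX := trace_mul_re_le_trace_mul_re hσ (hK.posSemidef_krausAdjoint_sub X)
  have hρX := trace_mul_re_le_trace_mul_re hρ (hK.posSemidef_krausAdjoint_sub Xᴴ)
  rw [krausAdjoint_conjTranspose, conjTranspose_conjTranspose, conjTranspose_conjTranspose] at hρX
  simp only [chiFunctional, trace_krausMap_mul]
  linarith [mul_le_mul_of_nonneg_left hρX ht]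

/-- **Data processing inequality** for the quantum relative entropy. -/
theorem IsKraus.relEntropy_krausMap_le [DecidableEq m] (hK : IsKraus K) (hρ : ρ.PosSemidef)
    (hσ : σ.PosSemidef) (hρσ : SupportLE ρ σ) :
    relEntropy (krausMap K ρ) (krausMap K σ) ≤ relEntropy ρ σ := by
  have hsupp := supportLE_krausMap hσ hρσ K
  have hchi := fun t (ht : 0 ≤ t) => hK.chiFunctional_krausMap_le hρ hσ ht
  have htrace := hK.trace_krausMap ρ
  obtain ⟨U', p', hp', hρ'⟩ := exists_eq_spectralMatrix (posSemidef_krausMap (K := K) hρ)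
  obtain ⟨V', q', hq', hσ'⟩ := exists_eq_spectralMatrix (posSemidef_krausMap (K := K) hσ)
  obtain ⟨U, p, hp, rfl⟩ := exists_eq_spectralMatrix hρ
  obtain ⟨V, q, hq, rfl⟩ := exists_eq_spectralMatrix hσ
  rw [hρ', hσ'] at hsupp ⊢
  rw [relEntropy_spectralMatrix _ _ hsupp hp', relEntropy_spectralMatrix _ _ hρσ hp]
  refine klDiv_le_klDiv_of_chiDiv_le (nussbaumFst_nonneg U V hp) (nussbaumSnd_nonneg U V hq)
    (fun x => nussbaumFst_eq_zero U V hρσ hp) (nussbaumFst_nonneg U' V' hp')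
    (nussbaumSnd_nonneg U' V' hq') (fun x => nussbaumFst_eq_zero U' V' hsupp hp') ?_ fun t ht => ?_
  · rw [sum_nussbaumFst, sum_nussbaumFst, ← hρ', htrace]
  · obtain ⟨X, hX⟩ := (isGreatest_chiFunctional U' V' hp' hq' ht).1
    rw [← hX, ← hρ', ← hσ']
    exact (hchi t ht.le X).trans ((isGreatest_chiFunctional U V hp hq ht).2 ⟨_, rfl⟩)

/-- The Kraus operators of the trace, viewed as a channel to a one-dimensional system. -/
def krausTrace (n : Type) [DecidableEq n] : n → Matrix Unit n ℂ := fun i => single () i 1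

lemma isKraus_krausTrace (n : Type) [Fintype n] [DecidableEq n] : IsKraus (krausTrace n) := by
  simp only [IsKraus, krausTrace, conjTranspose_single, single_mul_single_same, star_one, mul_one,
    sum_single_one]

/-- **Klein's inequality**. -/
theorem relEntropy_nonneg (hρ : ρ.PosSemidef) (hσ : σ.PosSemidef) (hρσ : SupportLE ρ σ)
    (htrace : ρ.trace = σ.trace) : 0 ≤ relEntropy ρ σ := by
  have hK := isKraus_krausTrace n
  have heq : krausMap (krausTrace n) ρ = krausMap (krausTrace n) σ := by
    have h := ((hK.trace_krausMap ρ).trans htrace).trans (hK.trace_krausMap σ).symm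
    rw [trace, trace, Fintype.sum_unique, Fintype.sum_unique] at h
    ext
    exact h
  calc 0 = relEntropy (krausMap (krausTrace n) ρ) (krausMap (krausTrace n) σ) := by
        rw [heq, relEntropy, sub_self, Matrix.mul_zero, trace_zero, Complex.zero_re]
    _ ≤ relEntropy ρ σ := hK.relEntropy_krausMap_le hρ hσ hρσ

end DataProcessing

/-! ### Bipartite systems and local channels -/

section Bipartite

variable {A B : Type}

lemma ptraceB_eq_sum_submatrix [Fintype B] (τ : Matrix (A × B) (A × B) ℂ) :
    ptraceB τ = ∑ b, τ.submatrix (·, b) (·, b) := by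
  ext a a'
  simp only [ptraceB, of_apply, Matrix.sum_apply, submatrix_apply]

lemma ptraceA_eq_sum_submatrix [Fintype A] (τ : Matrix (A × B) (A × B) ℂ) :
    ptraceA τ = ∑ a, τ.submatrix (a, ·) (a, ·) := by
  ext b b'
  simp only [ptraceA, of_apply, Matrix.sum_apply, submatrix_apply]

lemma posSemidef_ptraceB [Fintype B] {τ : Matrix (A × B) (A × B) ℂ} (hτ : τ.PosSemidef) :
    (ptraceB τ).PosSemidef :=
  ptraceB_eq_sum_submatrix τ ▸ posSemidef_sum _ fun _ _ => hτ.submatrix _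

lemma posSemidef_ptraceA [Fintype A] {τ : Matrix (A × B) (A × B) ℂ} (hτ : τ.PosSemidef) :
    (ptraceA τ).PosSemidef :=
  ptraceA_eq_sum_submatrix τ ▸ posSemidef_sum _ fun _ _ => hτ.submatrix _

variable [Fintype A] [Fintype B]

lemma trace_ptraceB_mul [DecidableEq B] (τ : Matrix (A × B) (A × B) ℂ) (X : Matrix A A ℂ) :
    (ptraceB τ * X).trace = (τ * (X ⊗ₖ (1 : Matrix B B ℂ))).trace := by
  simp only [trace, diag_apply, mul_apply, ptraceB, of_apply, kroneckerMap_apply, one_apply,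
    Fintype.sum_prod_type, mul_ite, mul_one, mul_zero, Finset.sum_ite_eq', Finset.mem_univ, if_true,
    Finset.sum_mul]
  exact Finset.sum_congr rfl fun a _ => Finset.sum_comm

lemma trace_ptraceA_mul [DecidableEq A] (τ : Matrix (A × B) (A × B) ℂ) (Y : Matrix B B ℂ) :
    (ptraceA τ * Y).trace = (τ * ((1 : Matrix A A ℂ) ⊗ₖ Y)).trace := by
  simp only [trace, diag_apply, mul_apply, ptraceA, of_apply, kroneckerMap_apply, one_apply,
    Fintype.sum_prod_type_right, ite_mul, mul_ite, one_mul, zero_mul, mul_zero, Finset.sum_ite_eq',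
    Finset.mem_univ, if_true, Finset.sum_mul]
  exact Finset.sum_congr rfl fun b _ => Finset.sum_comm

lemma ext_of_trace_mul_kronecker {τ τ' : Matrix (A × B) (A × B) ℂ}
    (h : ∀ (X : Matrix A A ℂ) (Y : Matrix B B ℂ),
      (τ * (X ⊗ₖ Y)).trace = (τ' * (X ⊗ₖ Y)).trace) : τ = τ' := by
  classical
  ext ⟨a, b⟩ ⟨a', b'⟩
  simpa only [single_kronecker_single, trace_mul_single, mul_one, MulOpposite.op_one, one_smul]
    using h (single a' a 1) (single b' b 1)

end Bipartite

section LocalChannels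

lemma sum_kronecker_sum {R l m n p ι κ : Type*} [NonUnitalNonAssocSemiring R] [Fintype ι]
    [Fintype κ] (M : ι → Matrix l m R) (N : κ → Matrix n p R) :
    (∑ i, M i) ⊗ₖ (∑ j, N j) = ∑ x : ι × κ, M x.1 ⊗ₖ N x.2 := by
  ext x y
  simp only [Matrix.sum_apply, kroneckerMap_apply, Finset.sum_mul_sum, Fintype.sum_prod_type]

variable {A B A' B' ι κ : Type} [Fintype ι] [Fintype κ]

/-- The Kraus operators of the product of the channels with Kraus operators `K` and `L`. -/
def krausProd (K : ι → Matrix A' A ℂ) (L : κ → Matrix B' B ℂ) :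
    ι × κ → Matrix (A' × B') (A × B) ℂ :=
  fun x => K x.1 ⊗ₖ L x.2

lemma localApply_eq_krausMap [Fintype A] [Fintype B] (K : ι → Matrix A' A ℂ)
    (L : κ → Matrix B' B ℂ) (τ : Matrix (A × B) (A × B) ℂ) :
    localApply K L τ = krausMap (krausProd K L) τ :=
  (Fintype.sum_prod_type fun x => krausProd K L x * τ * (krausProd K L x)ᴴ).symm

lemma krausMap_krausProd_kronecker [Fintype A] [Fintype B] (K : ι → Matrix A' A ℂ)
    (L : κ → Matrix B' B ℂ) (ρ : Matrix A A ℂ) (σ : Matrix B B ℂ) :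
    krausMap (krausProd K L) (ρ ⊗ₖ σ) = krausMap K ρ ⊗ₖ krausMap L σ := by
  simp only [krausMap, krausProd, conjTranspose_kronecker, ← mul_kronecker_mul,
    sum_kronecker_sum]

variable [Fintype A'] [Fintype B']

lemma krausAdjoint_krausProd_kronecker (K : ι → Matrix A' A ℂ) (L : κ → Matrix B' B ℂ)
    (X : Matrix A' A' ℂ) (Y : Matrix B' B' ℂ) :
    krausAdjoint (krausProd K L) (X ⊗ₖ Y) = krausAdjoint K X ⊗ₖ krausAdjoint L Y := by
  simp only [krausAdjoint, krausProd, conjTranspose_kronecker, ← mul_kronecker_mul,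
    sum_kronecker_sum]

lemma trace_localApply_mul_kronecker [Fintype A] [Fintype B] (K : ι → Matrix A' A ℂ)
    (L : κ → Matrix B' B ℂ) (τ : Matrix (A × B) (A × B) ℂ) (X : Matrix A' A' ℂ)
    (Y : Matrix B' B' ℂ) :
    (localApply K L τ * (X ⊗ₖ Y)).trace = (τ * (krausAdjoint K X ⊗ₖ krausAdjoint L Y)).trace := by
  rw [localApply_eq_krausMap, trace_krausMap_mul, krausAdjoint_krausProd_kronecker]

variable [Fintype A] [Fintype B] {K : ι → Matrix A' A ℂ} {L : κ → Matrix B' B ℂ}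

lemma isKraus_krausProd [DecidableEq A] [DecidableEq B] (hK : IsKraus K) (hL : IsKraus L) :
    IsKraus (krausProd K L) := by
  classical
  rw [isKraus_iff_krausAdjoint_one, ← one_kronecker_one, krausAdjoint_krausProd_kronecker,
    hK.krausAdjoint_one, hL.krausAdjoint_one, one_kronecker_one]

lemma isDensity_localApply [DecidableEq A] [DecidableEq B] (hK : IsKraus K) (hL : IsKraus L)
    {ρ : Matrix (A × B) (A × B) ℂ} (hρ : IsDensity ρ) : IsDensity (localApply K L ρ) :=
  localApply_eq_krausMap K L ρ ▸ (isKraus_krausProd hK hL).isDensity_krausMap hρ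

end LocalChannels

section ReducedStates

variable {A B A' B' ι κ : Type} [Fintype A] [Fintype B] [Fintype ι] [Fintype κ]

lemma ptraceB_localApply [Finite A'] [Fintype B'] [DecidableEq B] (K : ι → Matrix A' A ℂ)
    {L : κ → Matrix B' B ℂ} (hL : IsKraus L) (τ : Matrix (A × B) (A × B) ℂ) :
    ptraceB (localApply K L τ) = krausMap K (ptraceB τ) := by
  classical
  have := Fintype.ofFinite A'
  rw [ext_iff_trace_mul_right]
  intro X
  rw [trace_ptraceB_mul, trace_localApply_mul_kronecker, hL.krausAdjoint_one, ← trace_ptraceB_mul,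
    trace_krausMap_mul]

lemma ptraceA_localApply [Fintype A'] [Finite B'] [DecidableEq A] {K : ι → Matrix A' A ℂ}
    (hK : IsKraus K) (L : κ → Matrix B' B ℂ) (τ : Matrix (A × B) (A × B) ℂ) :
    ptraceA (localApply K L τ) = krausMap L (ptraceA τ) := by
  classical
  have := Fintype.ofFinite B'
  rw [ext_iff_trace_mul_right]
  intro Y
  rw [trace_ptraceA_mul, trace_localApply_mul_kronecker, hK.krausAdjoint_one, ← trace_ptraceA_mul,
    trace_krausMap_mul]

end ReducedStates

/-! ### Mutual information as a relative entropy -/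

section BasisMeasurement

variable {n : Type} [Fintype n] [DecidableEq n]

lemma vnEntropy_eq_neg_trace_mul_cfc {ρ : Matrix n n ℂ} (hρ : ρ.IsHermitian) :
    vnEntropy ρ = -(ρ * cfc (Real.logb 2) ρ).trace.re := by
  have hmul : ρ * cfc (Real.logb 2) ρ = spectralMatrix hρ.eigenvectorUnitary
      (hρ.eigenvalues * (Real.logb 2 ∘ hρ.eigenvalues)) := by
    nth_rw 1 [eq_spectralMatrix hρ]
    nth_rw 3 [eq_spectralMatrix hρ]
    rw [cfc_spectralMatrix, spectralMatrix_mul]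
  rw [vnEntropy, dif_pos hρ, hmul, trace_spectralMatrix, Complex.re_sum]
  rfl

lemma vnEntropy_spectralMatrix (U : unitaryGroup n ℂ) (p : n → ℝ) :
    vnEntropy (spectralMatrix U p) = shannon p := by
  rw [vnEntropy_eq_neg_trace_mul_cfc (isHermitian_spectralMatrix U p), cfc_spectralMatrix,
    spectralMatrix_mul, trace_spectralMatrix, Complex.re_sum]
  rfl

/-- The outcome distribution of measuring the state `ρ` in the orthonormal basis formed by the
columns of `U`. -/
def basisDist (U : unitaryGroup n ℂ) (ρ : Matrix n n ℂ) : n → ℝ :=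
  fun i => (((U : Matrix n n ℂ)ᴴ * ρ * (U : Matrix n n ℂ)) i i).re

lemma ofReal_basisDist (U : unitaryGroup n ℂ) {ρ : Matrix n n ℂ} (hρ : ρ.IsHermitian) (i : n) :
    (basisDist U ρ i : ℂ) = ((U : Matrix n n ℂ)ᴴ * ρ * (U : Matrix n n ℂ)) i i :=
  (isHermitian_conjTranspose_mul_mul _ hρ).coe_re_apply_self i

lemma basisDist_nonneg (U : unitaryGroup n ℂ) {ρ : Matrix n n ℂ} (hρ : ρ.PosSemidef) (i : n) :
    0 ≤ basisDist U ρ i :=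
  (Complex.le_def.1 (hρ.conjTranspose_mul_mul_same (U : Matrix n n ℂ)).diag_nonneg).1

lemma basisDist_spectralMatrix (U : unitaryGroup n ℂ) (p : n → ℝ) :
    basisDist U (spectralMatrix U p) = p := by
  have hU : (U : Matrix n n ℂ)ᴴ * U = 1 := UnitaryGroup.star_mul_self U
  funext i
  rw [basisDist, Matrix.mul_assoc, spectralMatrix_mul_self, ← Matrix.mul_assoc, hU, Matrix.one_mul,
    diagonal_apply_eq, Complex.ofReal_re]

lemma trace_mul_spectralMatrix_re (ρ : Matrix n n ℂ) (U : unitaryGroup n ℂ) (f : n → ℝ) :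
    (ρ * spectralMatrix U f).trace.re = ∑ i, basisDist U ρ i * f i := by
  simp only [trace_mul_spectralMatrix, Complex.re_sum, Complex.re_mul_ofReal, basisDist]

end BasisMeasurement

section MutualInformation

variable {A B : Type} [Fintype A] [Fintype B] [DecidableEq A] [DecidableEq B]

/-- The product of two unitaries, acting on the tensor product. -/
def unitaryKronecker (U : unitaryGroup A ℂ) (V : unitaryGroup B ℂ) : unitaryGroup (A × B) ℂ :=
  ⟨(U : Matrix A A ℂ) ⊗ₖ (V : Matrix B B ℂ), kronecker_mem_unitary U.2 V.2⟩

lemma spectralMatrix_kronecker (U : unitaryGroup A ℂ) (V : unitaryGroup B ℂ) (p : A → ℝ)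
    (q : B → ℝ) : spectralMatrix U p ⊗ₖ spectralMatrix V q =
      spectralMatrix (unitaryKronecker U V) (fun x => p x.1 * q x.2) := by
  simp only [spectralMatrix_eq, unitaryKronecker, mul_kronecker_mul, diagonal_kronecker_diagonal,
    conjTranspose_kronecker, Complex.ofReal_mul]

lemma conj_unitaryKronecker (U : unitaryGroup A ℂ) (V : unitaryGroup B ℂ)
    (τ : Matrix (A × B) (A × B) ℂ) :
    (unitaryKronecker U V : Matrix (A × B) (A × B) ℂ)ᴴ * τ * (unitaryKronecker U V) =
      localApply (fun _ : Unit => (U : Matrix A A ℂ)ᴴ) (fun _ : Unit => (V : Matrix B B ℂ)ᴴ) τ := by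
  simp only [localApply, unitaryKronecker, conjTranspose_kronecker, conjTranspose_conjTranspose,
    Finset.univ_unique, Finset.sum_singleton]

lemma isKraus_unitary {n : Type} [Fintype n] [DecidableEq n] (U : unitaryGroup n ℂ) :
    IsKraus fun _ : Unit => (U : Matrix n n ℂ)ᴴ := by
  have hU : (U : Matrix n n ℂ) * (U : Matrix n n ℂ)ᴴ = 1 :=
    mul_eq_one_comm.1 (UnitaryGroup.star_mul_self U)
  simpa only [IsKraus, conjTranspose_conjTranspose, Finset.univ_unique, Finset.sum_singleton]
    using hU

lemma margA_basisDist (U : unitaryGroup A ℂ) (V : unitaryGroup B ℂ)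
    (τ : Matrix (A × B) (A × B) ℂ) :
    margA (basisDist (unitaryKronecker U V) τ) = basisDist U (ptraceB τ) := by
  have h := ptraceB_localApply (fun _ : Unit => (U : Matrix A A ℂ)ᴴ) (isKraus_unitary V) τ
  funext a
  have haa := congrArg Complex.re (congrFun (congrFun h a) a)
  simpa [margA, basisDist, ptraceB, krausMap, ← conj_unitaryKronecker] using haa

lemma margB_basisDist (U : unitaryGroup A ℂ) (V : unitaryGroup B ℂ)
    (τ : Matrix (A × B) (A × B) ℂ) :
    margB (basisDist (unitaryKronecker U V) τ) = basisDist V (ptraceA τ) := by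
  have h := ptraceA_localApply (isKraus_unitary U) (fun _ : Unit => (V : Matrix B B ℂ)ᴴ) τ
  funext b
  have hbb := congrArg Complex.re (congrFun (congrFun h b) b)
  simpa [margB, basisDist, ptraceA, krausMap, ← conj_unitaryKronecker] using hbb

lemma supportLE_ptraceB_kronecker_ptraceA {A B : Type} [Fintype A] [Fintype B]
    {τ : Matrix (A × B) (A × B) ℂ} (hτ : τ.PosSemidef) :
    SupportLE τ (ptraceB τ ⊗ₖ ptraceA τ) := by
  classical
  obtain ⟨U, p, -, hp⟩ := exists_eq_spectralMatrix (posSemidef_ptraceB hτ)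
  obtain ⟨V, q, -, hq⟩ := exists_eq_spectralMatrix (posSemidef_ptraceA hτ)
  rw [hp, hq, spectralMatrix_kronecker, supportLE_spectralMatrix_iff _ hτ]
  intro x hx
  rw [← basisDist_spectralMatrix U p, ← basisDist_spectralMatrix V q, ← hp, ← hq,
    ← margA_basisDist U V, ← margB_basisDist U V] at hx
  rw [← ofReal_basisDist _ hτ.isHermitian, Complex.ofReal_eq_zero]
  exact eq_zero_of_margA_mul_margB_eq_zero (basisDist_nonneg _ hτ) hx

variable {τ : Matrix (A × B) (A × B) ℂ}

theorem mutInfo_eq_relEntropy (hτ : τ.PosSemidef) :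
    mutInfo τ = relEntropy τ (ptraceB τ ⊗ₖ ptraceA τ) := by
  obtain ⟨U, p, -, hp⟩ := exists_eq_spectralMatrix (posSemidef_ptraceB hτ)
  obtain ⟨V, q, -, hq⟩ := exists_eq_spectralMatrix (posSemidef_ptraceA hτ)
  have hmargA : margA (basisDist (unitaryKronecker U V) τ) = p := by
    rw [margA_basisDist, hp, basisDist_spectralMatrix]
  have hmargB : margB (basisDist (unitaryKronecker U V) τ) = q := by
    rw [margB_basisDist, hq, basisDist_spectralMatrix]
  have hcross := sum_mul_logb_margA_mul_margB (basisDist_nonneg (unitaryKronecker U V) hτ)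
  rw [hmargA, hmargB] at hcross
  rw [mutInfo, relEntropy, hp, hq, spectralMatrix_kronecker, cfc_spectralMatrix, Matrix.mul_sub,
    trace_sub, Complex.sub_re, trace_mul_spectralMatrix_re, vnEntropy_spectralMatrix,
    vnEntropy_spectralMatrix, vnEntropy_eq_neg_trace_mul_cfc hτ.isHermitian]
  simp only [Function.comp_apply, hcross]
  ring

theorem mutInfo_localApply_le {A' B' ι κ : Type} [Fintype A'] [Fintype B'] [Fintype ι] [Fintype κ]
    [DecidableEq A'] [DecidableEq B'] {K : ι → Matrix A' A ℂ} {L : κ → Matrix B' B ℂ}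
    (hK : IsKraus K) (hL : IsKraus L) (hτ : τ.PosSemidef) :
    mutInfo (localApply K L τ) ≤ mutInfo τ := by
  have hτ' : (localApply K L τ).PosSemidef :=
    localApply_eq_krausMap K L τ ▸ posSemidef_krausMap hτ
  rw [mutInfo_eq_relEntropy hτ, mutInfo_eq_relEntropy hτ', ptraceB_localApply K hL,
    ptraceA_localApply hK L, ← krausMap_krausProd_kronecker, localApply_eq_krausMap]
  exact (isKraus_krausProd hK hL).relEntropy_krausMap_le hτ
    ((posSemidef_ptraceB hτ).kronecker (posSemidef_ptraceA hτ))
    (supportLE_ptraceB_kronecker_ptraceA hτ)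

lemma mutInfo_nonneg (hτ : IsDensity τ) : 0 ≤ mutInfo τ := by
  have htraceB : (ptraceB τ).trace = 1 := by
    rw [← Matrix.mul_one (ptraceB τ), trace_ptraceB_mul, one_kronecker_one, Matrix.mul_one, hτ.2]
  have htraceA : (ptraceA τ).trace = 1 := by
    rw [← Matrix.mul_one (ptraceA τ), trace_ptraceA_mul, one_kronecker_one, Matrix.mul_one, hτ.2]
  rw [mutInfo_eq_relEntropy hτ.1]
  refine relEntropy_nonneg hτ.1 ((posSemidef_ptraceB hτ.1).kronecker (posSemidef_ptraceA hτ.1))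
    (supportLE_ptraceB_kronecker_ptraceA hτ.1) ?_
  rw [trace_kronecker, htraceA, htraceB, mul_one, hτ.2]

end MutualInformation

/-! ### Tensor powers -/

section PiKronecker

variable {J m n o ι R : Type*} [Fintype J]

/-- The Kronecker product of a finite family of matrices, with rows and columns indexed by functions
on the index set of the family. -/
def piKronecker [CommMonoid R] (M : J → Matrix m n R) : Matrix (J → m) (J → n) R :=
  of fun x y => ∏ l, M l (x l) (y l)

lemma piKronecker_mul_piKronecker [CommSemiring R] [DecidableEq J] [Fintype n]
    (M : J → Matrix m n R) (N : J → Matrix n o R) :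
    piKronecker M * piKronecker N = piKronecker fun l => M l * N l := by
  ext x y
  simp only [piKronecker, mul_apply, of_apply, Finset.prod_univ_sum, Fintype.piFinset_univ,
    Finset.prod_mul_distrib]

lemma piKronecker_one [CommSemiring R] [DecidableEq n] :
    piKronecker (fun _ : J => (1 : Matrix n n R)) = 1 := by
  ext x y
  simp only [piKronecker, of_apply, one_apply, Finset.prod_ite_zero, Finset.prod_const_one,
    Finset.mem_univ, true_imp_iff, funext_iff]

lemma conjTranspose_piKronecker [CommSemiring R] [StarRing R] (M : J → Matrix m n R) :
    (piKronecker M)ᴴ = piKronecker fun l => (M l)ᴴ := by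
  ext x y
  simp only [piKronecker, conjTranspose_apply, of_apply, star_prod]

lemma piKronecker_sum [CommSemiring R] [DecidableEq J] [Fintype ι] (M : J → ι → Matrix m n R) :
    piKronecker (fun l => ∑ i, M l i) = ∑ f : J → ι, piKronecker fun l => M l (f l) := by
  ext x y
  simp only [piKronecker, of_apply, Matrix.sum_apply, Finset.prod_univ_sum, Fintype.piFinset_univ]

lemma trace_piKronecker [CommSemiring R] [DecidableEq J] [Fintype n] (M : J → Matrix n n R) :
    (piKronecker M).trace = ∏ l, (M l).trace := by
  simp only [piKronecker, trace, diag_apply, of_apply, Finset.prod_univ_sum, Fintype.piFinset_univ]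

open scoped MatrixOrder in
lemma posSemidef_piKronecker [Finite n] {M : J → Matrix n n ℂ}
    (hM : ∀ l, (M l).PosSemidef) : (piKronecker M).PosSemidef := by
  classical
  have := Fintype.ofFinite n
  choose S hS using fun l => CStarAlgebra.nonneg_iff_eq_star_mul_self.1 (hM l).nonneg
  have hsq : piKronecker M = (piKronecker S)ᴴ * piKronecker S := by
    rw [conjTranspose_piKronecker, piKronecker_mul_piKronecker]
    exact congrArg piKronecker (funext hS)
  rw [hsq]
  exact posSemidef_conjTranspose_mul_self _

lemma piKronecker_mulSingle_apply [CommSemiring R] [DecidableEq J] [Fintype n] [DecidableEq n]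
    (k : J) (X : Matrix n n R) (y x : J → n) :
    piKronecker (Pi.mulSingle k X) y x =
      ∑ a, if y = Function.update x k a then X a (x k) else 0 := by
  by_cases h : ∃ a, y = Function.update x k a
  · obtain ⟨a, rfl⟩ := h
    simp only [(Function.update_injective x k).eq_iff, Finset.sum_ite_eq, Finset.mem_univ, if_true]
    refine (Fintype.prod_eq_single k fun l hl => ?_).trans ?_
    · rw [Pi.mulSingle_eq_of_ne hl, Function.update_of_ne hl, one_apply_eq]
    · rw [Pi.mulSingle_eq_same, Function.update_self]
  · obtain ⟨l, hlk, hl⟩ : ∃ l ≠ k, y l ≠ x l := by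
      by_contra! heq
      exact h ⟨y k, Function.eq_update_iff.2 ⟨rfl, heq⟩⟩
    rw [Finset.sum_eq_zero fun a _ => if_neg fun ha => h ⟨a, ha⟩]
    refine Finset.prod_eq_zero (Finset.mem_univ l) ?_
    rw [Pi.mulSingle_eq_of_ne hlk, one_apply_ne hl]

lemma sum_mul_piKronecker_mulSingle [CommSemiring R] [DecidableEq J] [Fintype n] [DecidableEq n]
    (F : (J → n) → R) (k : J) (X : Matrix n n R) (x : J → n) :
    ∑ y, F y * piKronecker (Pi.mulSingle k X) y x =
      ∑ a, F (Function.update x k a) * X a (x k) := by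
  simp only [piKronecker_mulSingle_apply, Finset.mul_sum, mul_ite, mul_zero]
  rw [Finset.sum_comm]
  simp only [Finset.sum_ite_eq', Finset.mem_univ, if_true]

end PiKronecker

section KrausPower

/-- The Kraus operators of the tensor power, with factors indexed by `J`, of the channel with Kraus
operators `K`. -/
def krausPow {m n ι : Type*} (J : Type*) [Fintype J] (K : ι → Matrix m n ℂ) :
    (J → ι) → Matrix (J → m) (J → n) ℂ :=
  fun f => piKronecker fun l => K (f l)

lemma krausAdjoint_krausPow_piKronecker {m n ι J : Type*} [Fintype J] [DecidableEq J] [Fintype ι]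
    [Fintype m] (K : ι → Matrix m n ℂ) (X : J → Matrix m m ℂ) :
    krausAdjoint (krausPow J K) (piKronecker X) = piKronecker fun l => krausAdjoint K (X l) := by
  simp only [krausAdjoint, krausPow, conjTranspose_piKronecker, piKronecker_mul_piKronecker,
    piKronecker_sum]

variable {m n ι J : Type} [Fintype J] [DecidableEq J] [Fintype m] [Fintype n] [Fintype ι]
  [DecidableEq n] {K : ι → Matrix m n ℂ}

variable (J) in
lemma isKraus_krausPow (hK : IsKraus K) : IsKraus (krausPow J K) := by
  classical
  rw [isKraus_iff_krausAdjoint_one, ← piKronecker_one, krausAdjoint_krausPow_piKronecker,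
    hK.krausAdjoint_one, piKronecker_one]

lemma IsKraus.krausAdjoint_krausPow_mulSingle [DecidableEq m] (hK : IsKraus K) (k : J)
    (X : Matrix m m ℂ) : krausAdjoint (krausPow J K) (piKronecker (Pi.mulSingle k X)) =
      piKronecker (Pi.mulSingle k (krausAdjoint K X)) := by
  rw [krausAdjoint_krausPow_piKronecker]
  exact congrArg piKronecker <| funext <|
    Pi.apply_mulSingle (fun _ => krausAdjoint K) (fun _ => hK.krausAdjoint_one) k X

end KrausPower

/-! ### Broadcast copies -/

section Broadcast

lemma posSemidef_tpow {A B : Type} [Finite A] [Finite B] {ρ : Matrix (A × B) (A × B) ℂ}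
    (hρ : ρ.PosSemidef) (n : ℕ) : (tpow ρ n).PosSemidef :=
  (posSemidef_piKronecker fun _ : Fin n => hρ).submatrix _

variable {A B : Type} [Fintype A] [Fintype B] {n : ℕ}

lemma trace_tpow_mul_kronecker (ρ : Matrix (A × B) (A × B) ℂ) (X : Fin n → Matrix A A ℂ)
    (Y : Fin n → Matrix B B ℂ) :
    (tpow ρ n * (piKronecker X ⊗ₖ piKronecker Y)).trace = ∏ l, (ρ * (X l ⊗ₖ Y l)).trace := by
  set e := (Equiv.arrowProdEquivProdArrow (Fin n) (fun _ => A) (fun _ => B)).symm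
  have hρ : tpow ρ n = (piKronecker fun _ => ρ).submatrix e e := rfl
  have hXY : piKronecker X ⊗ₖ piKronecker Y = (piKronecker fun l => X l ⊗ₖ Y l).submatrix e e := by
    ext x y
    simp only [piKronecker, kroneckerMap_apply, submatrix_apply, of_apply, Finset.prod_mul_distrib]
    rfl
  rw [hρ, hXY, submatrix_mul_equiv, piKronecker_mul_piKronecker, ← trace_piKronecker]
  exact Fintype.sum_equiv e _ _ fun _ => rfl

variable [DecidableEq A] [DecidableEq B]

lemma trace_copyMarginal_mul_kronecker
    (τ : Matrix ((Fin n → A) × (Fin n → B)) ((Fin n → A) × (Fin n → B)) ℂ) (k : Fin n)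
    (X : Matrix A A ℂ) (Y : Matrix B B ℂ) :
    (copyMarginal τ k * (X ⊗ₖ Y)).trace =
      (τ * (piKronecker (Pi.mulSingle k X) ⊗ₖ piKronecker (Pi.mulSingle k Y))).trace := by
  have hcopy (x y : A × B) : copyMarginal τ k x y = ∑ z : (Fin n → A) × (Fin n → B),
      if (z.1 k, z.2 k) = x then
        τ z (Function.update z.1 k y.1, Function.update z.2 k y.2) else 0 := by
    simp only [copyMarginal, of_apply, Fintype.sum_prod_type, Prod.ext_iff]
  calc (copyMarginal τ k * (X ⊗ₖ Y)).trace
      = ∑ x, ∑ z : (Fin n → A) × (Fin n → B), if (z.1 k, z.2 k) = x then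
          ∑ y : A × B, τ z (Function.update z.1 k y.1, Function.update z.2 k y.2) *
            (X y.1 x.1 * Y y.2 x.2) else 0 := by
        simp only [trace, diag_apply, mul_apply, kroneckerMap_apply, hcopy, Finset.sum_mul]
        refine Finset.sum_congr rfl fun x _ => Finset.sum_comm.trans ?_
        simp only [ite_mul, zero_mul, Finset.sum_ite_irrel, Finset.sum_const_zero]
    _ = ∑ z : (Fin n → A) × (Fin n → B), ∑ y : A × B,
          τ z (Function.update z.1 k y.1, Function.update z.2 k y.2) *
            (X y.1 (z.1 k) * Y y.2 (z.2 k)) := by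
        rw [Finset.sum_comm]
        simp only [Finset.sum_ite_eq, Finset.mem_univ, if_true]
    _ = (τ * (piKronecker (Pi.mulSingle k X) ⊗ₖ piKronecker (Pi.mulSingle k Y))).trace := by
        refine Finset.sum_congr rfl fun z _ => ?_
        simp only [diag_apply, mul_apply, kroneckerMap_apply, Fintype.sum_prod_type, ← mul_assoc,
          sum_mul_piKronecker_mulSingle]
        simp only [mul_right_comm _ (X _ _), mul_right_comm _ (piKronecker (Pi.mulSingle k X) _ _),
          ← Finset.sum_mul, sum_mul_piKronecker_mulSingle]

lemma isBroadcast_tpow {ρ : Matrix (A × B) (A × B) ℂ} (hρ : IsDensity ρ) (n : ℕ) :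
    IsBroadcast n (tpow ρ n) ρ := by
  refine ⟨⟨posSemidef_tpow hρ.1 n, ?_⟩, fun k => ext_of_trace_mul_kronecker fun X Y => ?_⟩
  · rw [← Matrix.mul_one (tpow ρ n), ← one_kronecker_one, ← piKronecker_one, ← piKronecker_one,
      trace_tpow_mul_kronecker]
    simp only [one_kronecker_one, Matrix.mul_one, hρ.2, Finset.prod_const_one]
  · rw [trace_copyMarginal_mul_kronecker, trace_tpow_mul_kronecker]
    refine (Fintype.prod_eq_single k fun l hl => ?_).trans ?_
    · rw [Pi.mulSingle_eq_of_ne hl, Pi.mulSingle_eq_of_ne hl, one_kronecker_one, Matrix.mul_one,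
        hρ.2]
    · rw [Pi.mulSingle_eq_same, Pi.mulSingle_eq_same]

variable {A' B' ι κ : Type} [Fintype A'] [Fintype B'] [Fintype ι] [Fintype κ] [DecidableEq A']
  [DecidableEq B'] {K : ι → Matrix A' A ℂ} {L : κ → Matrix B' B ℂ}

lemma copyMarginal_localApply_krausPow (hK : IsKraus K) (hL : IsKraus L)
    (τ : Matrix ((Fin n → A) × (Fin n → B)) ((Fin n → A) × (Fin n → B)) ℂ) (k : Fin n) :
    copyMarginal (localApply (krausPow (Fin n) K) (krausPow (Fin n) L) τ) k =
      localApply K L (copyMarginal τ k) :=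
  ext_of_trace_mul_kronecker fun X Y => by
    rw [trace_copyMarginal_mul_kronecker, trace_localApply_mul_kronecker,
      hK.krausAdjoint_krausPow_mulSingle, hL.krausAdjoint_krausPow_mulSingle,
      ← trace_copyMarginal_mul_kronecker, ← trace_localApply_mul_kronecker]

lemma IsBroadcast.localApply (hK : IsKraus K) (hL : IsKraus L)
    {τ : Matrix ((Fin n → A) × (Fin n → B)) ((Fin n → A) × (Fin n → B)) ℂ}
    {ρ : Matrix (A × B) (A × B) ℂ} (hτ : IsBroadcast n τ ρ) :
    IsBroadcast n (localApply (krausPow (Fin n) K) (krausPow (Fin n) L) τ) (localApply K L ρ) :=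
  ⟨isDensity_localApply (isKraus_krausPow _ hK) (isKraus_krausPow _ hL) hτ.1, fun k => by
    rw [copyMarginal_localApply_krausPow hK hL, hτ.2 k]⟩

lemma Ib_le_mutInfo {τ : Matrix ((Fin n → A) × (Fin n → B)) ((Fin n → A) × (Fin n → B)) ℂ}
    {ρ : Matrix (A × B) (A × B) ℂ} (hτ : IsBroadcast n τ ρ) : Ib n ρ ≤ mutInfo τ := by
  refine csInf_le ⟨0, ?_⟩ ⟨τ, hτ, rfl⟩
  rintro _ ⟨τ', hτ', rfl⟩
  exact mutInfo_nonneg hτ'.1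

theorem Ib_localApply_le (hK : IsKraus K) (hL : IsKraus L) {ρ : Matrix (A × B) (A × B) ℂ}
    (hρ : IsDensity ρ) (n : ℕ) : Ib n (localApply K L ρ) ≤ Ib n ρ := by
  refine le_csInf ⟨_, tpow ρ n, isBroadcast_tpow hρ n, rfl⟩ ?_
  rintro _ ⟨τ, hτ, rfl⟩
  exact (Ib_le_mutInfo (hτ.localApply hK hL)).trans
    (mutInfo_localApply_le (isKraus_krausPow _ hK) (isKraus_krausPow _ hL) hτ.1.1)

end Broadcast

/-- monotonicity of I_b^{(∞)} under local CPTP maps (given by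
Kraus representations), stated via the defining limits. -/
theorem stmt_12 {A B A' B' ι κ : Type}
    [Fintype A] [Fintype B] [Fintype A'] [Fintype B'] [Fintype ι] [Fintype κ]
    [DecidableEq A] [DecidableEq B] [DecidableEq A'] [DecidableEq B']
    (K : ι → Matrix A' A ℂ) (Lk : κ → Matrix B' B ℂ)
    (hK : IsKraus K) (hLk : IsKraus Lk)
    (ρ : Matrix (A × B) (A × B) ℂ) (hρ : IsDensity ρ)
    (L L' : ℝ)
    (hL : Tendsto (fun n : ℕ => Ib n ρ / n) atTop (nhds L))
    (hL' : Tendsto (fun n : ℕ => Ib n (localApply K Lk ρ) / n) atTop (nhds L')) :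
    L' ≤ L := by
  exact le_of_tendsto_of_tendsto' hL' hL fun n =>
    div_le_div_of_nonneg_right (Ib_localApply_le hK hLk hρ n) (Nat.cast_nonneg n)

end
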